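/- For all n, k ∈ ℕ: if the labelled sequent R, R_{[i]}wu ⊢ Γ is derivable in G3DS_n^k and there is an undirected i-path from w to u in R, then R ⊢ Γ is derivable in G3DS_n^k. -/

import Mathlib

/-!
Labelled sequent calculi for deontic STIT logics `DS_n^k`.
-/

namespace DeonticStit

/-- Deontic STIT formulae in negation normal form, with agents in `Fin (n+1)`:
literals `p`, `p̄` and the connectives `∨`, `∧`, `□`, `◇`, `[i]`, `⟨i⟩`,
`⊗_i`, `⊖_i`. -/
inductive SFml (n : ℕ) : Type
  | pos : ℕ → SFml n
  | neg : ℕ → SFml n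
  | or  : SFml n → SFml n → SFml n
  | and : SFml n → SFml n → SFml n
  | box : SFml n → SFml n
  | dia : SFml n → SFml n
  | abox : Fin (n + 1) → SFml n → SFml n
  | adia : Fin (n + 1) → SFml n → SFml n
  | obl : Fin (n + 1) → SFml n → SFml n
  | per : Fin (n + 1) → SFml n → SFml n

/-- Multisets of relational atoms `R_[i] w u`. -/
abbrev RAt (n : ℕ) : Type := Multiset (Fin (n + 1) × ℕ × ℕ)

/-- Multisets of deontic atoms `I_{⊗_i} u`. -/
abbrev DAt (n : ℕ) : Type := Multiset (Fin (n + 1) × ℕ)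

/-- Multisets of labelled formulae `w : φ`. -/
abbrev SSeq (n : ℕ) : Type := Multiset (ℕ × SFml n)

/-- The label `v` occurs in the labelled sequent `RA, IA ⊢ Γ`. -/
def soccurs {n : ℕ} (v : ℕ) (RA : RAt n) (IA : DAt n) (Γ : SSeq n) : Prop :=
  (∃ i w u, (i, w, u) ∈ RA ∧ (v = w ∨ v = u)) ∨ (∃ i, (i, v) ∈ IA) ∨ ∃ φ, (v, φ) ∈ Γ

/-- Undirected `i`-paths: `IPath RA i w u` holds iff `w = u` or there is a
sequence of atoms, each of the form `R_[i] v z` or `R_[i] z v`, linking `w`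
to `u`. -/
inductive IPath {n : ℕ} (RA : RAt n) (i : Fin (n + 1)) : ℕ → ℕ → Prop
  | refl (w : ℕ) : IPath RA i w w
  | fwd {w u v : ℕ} : (i, w, u) ∈ RA → IPath RA i u v → IPath RA i w v
  | bwd {w u v : ℕ} : (i, u, w) ∈ RA → IPath RA i u v → IPath RA i w v

/-- The negation-normal-form negation `φ̄` of a deontic STIT formula. -/
def SFml.negnnf {n : ℕ} : SFml n → SFml n
  | SFml.pos p => SFml.neg p
  | SFml.neg p => SFml.pos p
  | SFml.or φ ψ => SFml.and φ.negnnf ψ.negnnf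
  | SFml.and φ ψ => SFml.or φ.negnnf ψ.negnnf
  | SFml.box φ => SFml.dia φ.negnnf
  | SFml.dia φ => SFml.box φ.negnnf
  | SFml.abox i φ => SFml.adia i φ.negnnf
  | SFml.adia i φ => SFml.abox i φ.negnnf
  | SFml.obl i φ => SFml.per i φ.negnnf
  | SFml.per i φ => SFml.obl i φ.negnnf

/-- Substitution of the label `w` for the label `u`. -/
def substLbl (w u v : ℕ) : ℕ := if v = u then w else v

/-- Label substitution on relational atoms. -/
def substRAt {n : ℕ} (w u : ℕ) (RA : RAt n) : RAt n :=
  RA.map fun t => (t.1, substLbl w u t.2.1, substLbl w u t.2.2)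

/-- Label substitution on deontic atoms. -/
def substDAt {n : ℕ} (w u : ℕ) (IA : DAt n) : DAt n :=
  IA.map fun t => (t.1, substLbl w u t.2)

/-- Label substitution on labelled formulae. -/
def substSSeq {n : ℕ} (w u : ℕ) (Γ : SSeq n) : SSeq n :=
  Γ.map fun t => (substLbl w u t.1, t.2)

/-- Gated labelled sequent calculi for deontic STIT logics.  The rules `(id)`,
`(∨r)`, `(∧r)`, `(◇)`, `(□)`, `([i])`, `(⊗_i)`, `(IOA)` and (for `k > 0`)
`(APC_i^k)` are always present; the propagation rules `(Pr_⟨i⟩)`, `(Pr_⊖i¹)`,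
`(Pr_⊖i²)` are present exactly when the gate `gR` holds; the rules `(⟨i⟩)`,
`(⊖_i)` and the structural rules `(ref_i)`, `(euc_i)`, `(D2^i)`, `(D3^i)` are
present exactly when the gate `gG` holds; and the rules of `Str(DS)` (label
substitution, weakening, contractions, cut) are present exactly when the gate
`gS` holds.  In particular `SDer n k False True False` is `G3DS_n^k`,
`SDer n k True False False` is `DS_n^k L`, and `SDer n k True False True` is
`DS_n^k L + Str(DS)`. -/
inductive SDer (n k : ℕ) (gR gG gS : Prop) : RAt n → DAt n → SSeq n → Prop
  | id (RA : RAt n) (IA : DAt n) (Γ : SSeq n) (w p : ℕ) :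
      SDer n k gR gG gS RA IA ((w, SFml.pos p) ::ₘ (w, SFml.neg p) ::ₘ Γ)
  | orr {RA : RAt n} {IA : DAt n} {Γ : SSeq n} {w : ℕ} {φ ψ : SFml n} :
      SDer n k gR gG gS RA IA ((w, φ) ::ₘ (w, ψ) ::ₘ Γ) →
      SDer n k gR gG gS RA IA ((w, SFml.or φ ψ) ::ₘ Γ)
  | andr {RA : RAt n} {IA : DAt n} {Γ : SSeq n} {w : ℕ} {φ ψ : SFml n} :
      SDer n k gR gG gS RA IA ((w, φ) ::ₘ Γ) →
      SDer n k gR gG gS RA IA ((w, ψ) ::ₘ Γ) →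
      SDer n k gR gG gS RA IA ((w, SFml.and φ ψ) ::ₘ Γ)
  | diar {RA : RAt n} {IA : DAt n} {Γ : SSeq n} {w u : ℕ} {φ : SFml n} :
      SDer n k gR gG gS RA IA ((w, SFml.dia φ) ::ₘ (u, φ) ::ₘ Γ) →
      SDer n k gR gG gS RA IA ((w, SFml.dia φ) ::ₘ Γ)
  | boxr {RA : RAt n} {IA : DAt n} {Γ : SSeq n} {w u : ℕ} {φ : SFml n} :
      ¬ soccurs u RA IA ((w, SFml.box φ) ::ₘ Γ) →
      SDer n k gR gG gS RA IA ((u, φ) ::ₘ Γ) →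
      SDer n k gR gG gS RA IA ((w, SFml.box φ) ::ₘ Γ)
  | aboxr {RA : RAt n} {IA : DAt n} {Γ : SSeq n} {w u : ℕ} {i : Fin (n + 1)}
      {φ : SFml n} :
      ¬ soccurs u RA IA ((w, SFml.abox i φ) ::ₘ Γ) →
      SDer n k gR gG gS ((i, w, u) ::ₘ RA) IA ((u, φ) ::ₘ Γ) →
      SDer n k gR gG gS RA IA ((w, SFml.abox i φ) ::ₘ Γ)
  | oblr {RA : RAt n} {IA : DAt n} {Γ : SSeq n} {w u : ℕ} {i : Fin (n + 1)}
      {φ : SFml n} :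
      ¬ soccurs u RA IA ((w, SFml.obl i φ) ::ₘ Γ) →
      SDer n k gR gG gS RA ((i, u) ::ₘ IA) ((u, φ) ::ₘ Γ) →
      SDer n k gR gG gS RA IA ((w, SFml.obl i φ) ::ₘ Γ)
  | ioa {RA : RAt n} {IA : DAt n} {Γ : SSeq n} (ws : Fin (n + 1) → ℕ) (u : ℕ) :
      ¬ soccurs u RA IA Γ →
      SDer n k gR gG gS ((Finset.univ.val.map fun i => (i, ws i, u)) + RA) IA Γ →
      SDer n k gR gG gS RA IA Γ
  | apc {RA : RAt n} {IA : DAt n} {Γ : SSeq n} (hk : 0 < k) (i : Fin (n + 1))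
      (ws : Fin (k + 1) → ℕ) :
      (∀ m j : Fin (k + 1), (m : ℕ) < (j : ℕ) →
        SDer n k gR gG gS ((i, ws m, ws j) ::ₘ RA) IA Γ) →
      SDer n k gR gG gS RA IA Γ
  | prAdia {RA : RAt n} {IA : DAt n} {Γ : SSeq n} {u v : ℕ} {i : Fin (n + 1)}
      {φ : SFml n} :
      gR → IPath RA i u v →
      SDer n k gR gG gS RA IA ((u, SFml.adia i φ) ::ₘ (v, φ) ::ₘ Γ) →
      SDer n k gR gG gS RA IA ((u, SFml.adia i φ) ::ₘ Γ)
  | prPer1 {RA : RAt n} {IA : DAt n} {Γ : SSeq n} {w u v : ℕ} {i : Fin (n + 1)}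
      {φ : SFml n} :
      gR → IPath RA i u v →
      SDer n k gR gG gS RA ((i, u) ::ₘ IA) ((w, SFml.per i φ) ::ₘ (v, φ) ::ₘ Γ) →
      SDer n k gR gG gS RA ((i, u) ::ₘ IA) ((w, SFml.per i φ) ::ₘ Γ)
  | prPer2 {RA : RAt n} {IA : DAt n} {Γ : SSeq n} {w u : ℕ} {i : Fin (n + 1)}
      {φ : SFml n} :
      gR → ¬ soccurs u RA IA ((w, SFml.per i φ) ::ₘ Γ) →
      SDer n k gR gG gS RA ((i, u) ::ₘ IA) ((w, SFml.per i φ) ::ₘ (u, φ) ::ₘ Γ) →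
      SDer n k gR gG gS RA IA ((w, SFml.per i φ) ::ₘ Γ)
  | adiar {RA : RAt n} {IA : DAt n} {Γ : SSeq n} {w u : ℕ} {i : Fin (n + 1)}
      {φ : SFml n} :
      gG →
      SDer n k gR gG gS ((i, w, u) ::ₘ RA) IA
        ((w, SFml.adia i φ) ::ₘ (u, φ) ::ₘ Γ) →
      SDer n k gR gG gS ((i, w, u) ::ₘ RA) IA ((w, SFml.adia i φ) ::ₘ Γ)
  | operr {RA : RAt n} {IA : DAt n} {Γ : SSeq n} {w u : ℕ} {i : Fin (n + 1)}
      {φ : SFml n} :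
      gG →
      SDer n k gR gG gS RA ((i, u) ::ₘ IA) ((w, SFml.per i φ) ::ₘ (u, φ) ::ₘ Γ) →
      SDer n k gR gG gS RA ((i, u) ::ₘ IA) ((w, SFml.per i φ) ::ₘ Γ)
  | refl {RA : RAt n} {IA : DAt n} {Γ : SSeq n} {w : ℕ} {i : Fin (n + 1)} :
      gG → SDer n k gR gG gS ((i, w, w) ::ₘ RA) IA Γ →
      SDer n k gR gG gS RA IA Γ
  | euc {RA : RAt n} {IA : DAt n} {Γ : SSeq n} {w u v : ℕ} {i : Fin (n + 1)} :
      gG →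
      SDer n k gR gG gS ((i, w, u) ::ₘ (i, w, v) ::ₘ (i, u, v) ::ₘ RA) IA Γ →
      SDer n k gR gG gS ((i, w, u) ::ₘ (i, w, v) ::ₘ RA) IA Γ
  | d2 {RA : RAt n} {IA : DAt n} {Γ : SSeq n} {u : ℕ} {i : Fin (n + 1)} :
      gG → ¬ soccurs u RA IA Γ →
      SDer n k gR gG gS RA ((i, u) ::ₘ IA) Γ →
      SDer n k gR gG gS RA IA Γ
  | d3 {RA : RAt n} {IA : DAt n} {Γ : SSeq n} {w u : ℕ} {i : Fin (n + 1)} :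
      gG →
      SDer n k gR gG gS ((i, w, u) ::ₘ RA) ((i, w) ::ₘ (i, u) ::ₘ IA) Γ →
      SDer n k gR gG gS ((i, w, u) ::ₘ RA) ((i, w) ::ₘ IA) Γ
  | subst {RA : RAt n} {IA : DAt n} {Γ : SSeq n} (w u : ℕ) :
      gS → SDer n k gR gG gS RA IA Γ →
      SDer n k gR gG gS (substRAt w u RA) (substDAt w u IA) (substSSeq w u Γ)
  | wk {RA RA' : RAt n} {IA IA' : DAt n} {Γ Γ' : SSeq n} :
      gS → SDer n k gR gG gS RA IA Γ →
      SDer n k gR gG gS (RA + RA') (IA + IA') (Γ + Γ')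
  | ctrR {RA : RAt n} {IA : DAt n} {Γ : SSeq n} (a : Fin (n + 1) × ℕ × ℕ) :
      gS → SDer n k gR gG gS (a ::ₘ a ::ₘ RA) IA Γ →
      SDer n k gR gG gS (a ::ₘ RA) IA Γ
  | ctrI {RA : RAt n} {IA : DAt n} {Γ : SSeq n} (b : Fin (n + 1) × ℕ) :
      gS → SDer n k gR gG gS RA (b ::ₘ b ::ₘ IA) Γ →
      SDer n k gR gG gS RA (b ::ₘ IA) Γ
  | ctrF {RA : RAt n} {IA : DAt n} {Γ : SSeq n} (w : ℕ) (φ : SFml n) :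
      gS → SDer n k gR gG gS RA IA ((w, φ) ::ₘ (w, φ) ::ₘ Γ) →
      SDer n k gR gG gS RA IA ((w, φ) ::ₘ Γ)
  | cut {RA : RAt n} {IA : DAt n} {Γ : SSeq n} (w : ℕ) (φ : SFml n) :
      gS → SDer n k gR gG gS RA IA ((w, φ) ::ₘ Γ) →
      SDer n k gR gG gS RA IA ((w, SFml.negnnf φ) ::ₘ Γ) →
      SDer n k gR gG gS RA IA Γ

/-- The labelled calculus `G3DS_n^k`. -/
abbrev G3DS (n k : ℕ) : RAt n → DAt n → SSeq n → Prop := SDer n k False True False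

/-- The refined labelled calculus `DS_n^k L`. -/
abbrev DSL (n k : ℕ) : RAt n → DAt n → SSeq n → Prop := SDer n k True False False

/-- The calculus `DS_n^k L + Str(DS)`. -/
abbrev DSLStr (n k : ℕ) : RAt n → DAt n → SSeq n → Prop := SDer n k True False True

theorem IPath.mono {n : ℕ} {RA RA' : RAt n} {i : Fin (n + 1)} {w u : ℕ}
    (hs : ∀ a ∈ RA, a ∈ RA') (h : IPath RA i w u) : IPath RA' i w u := by
  induction h with
  | refl w => exact IPath.refl w
  | fwd h _ ih => exact IPath.fwd (hs _ h) ih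
  | bwd h _ ih => exact IPath.bwd (hs _ h) ih

theorem IPath.trans {n : ℕ} {RA : RAt n} {i : Fin (n + 1)} {w u v : ℕ}
    (h : IPath RA i w u) (h' : IPath RA i u v) : IPath RA i w v := by
  induction h with
  | refl w => exact h'
  | fwd h _ ih => exact IPath.fwd h (ih h')
  | bwd h _ ih => exact IPath.bwd h (ih h')

theorem IPath.symm {n : ℕ} {RA : RAt n} {i : Fin (n + 1)} {w u : ℕ}
    (h : IPath RA i w u) : IPath RA i u w := by
  induction h with
  | refl w => exact IPath.refl w
  | fwd h _ ih => exact ih.trans (IPath.bwd h (IPath.refl _))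
  | bwd h _ ih => exact ih.trans (IPath.fwd h (IPath.refl _))

theorem euc_mem {n k : ℕ} {RA : RAt n} {IA : DAt n} {Γ : SSeq n} {i : Fin (n + 1)}
    {w u v : ℕ} (h1 : (i, w, u) ∈ RA) (h2 : (i, w, v) ∈ RA)
    (hd : G3DS n k ((i, u, v) ::ₘ RA) IA Γ) : G3DS n k RA IA Γ := by
  by_cases huv : u = v
  · subst huv
    exact SDer.refl trivial hd
  · obtain ⟨R1, rfl⟩ := Multiset.exists_cons_of_mem h1
    have h2' : (i, w, v) ∈ R1 := by
      rcases Multiset.mem_cons.1 h2 with h | h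
      · cases h; exact absurd rfl huv
      · exact h
    obtain ⟨R2, rfl⟩ := Multiset.exists_cons_of_mem h2'
    apply SDer.euc trivial
    rw [Multiset.cons_swap (i, w, v), Multiset.cons_swap (i, w, u)]
    exact hd

theorem sym_mem {n k : ℕ} {RA : RAt n} {IA : DAt n} {Γ : SSeq n} {i : Fin (n + 1)}
    {w u : ℕ} (h1 : (i, w, u) ∈ RA)
    (hd : G3DS n k ((i, u, w) ::ₘ (i, w, w) ::ₘ RA) IA Γ) : G3DS n k RA IA Γ := by
  apply SDer.refl (w := w) (i := i) trivial
  exact euc_mem (w := w) (u := u) (v := w) (Multiset.mem_cons_of_mem h1)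
    (Multiset.mem_cons_self _ _) hd

theorem path_add {n k : ℕ} {R : RAt n} {IA : DAt n} {Γ : SSeq n} {i : Fin (n + 1)}
    {w u : ℕ} (hp : IPath R i w u) :
    ∀ RA : RAt n, (∀ a ∈ R, a ∈ RA) →
    (∀ RA' : RAt n, (∀ a ∈ RA, a ∈ RA') → (i, w, u) ∈ RA' → G3DS n k RA' IA Γ) →
    G3DS n k RA IA Γ := by
  induction hp with
  | refl w =>
    intro RA _ H
    exact SDer.refl trivial (H _ (fun a ha => Multiset.mem_cons_of_mem ha)
      (Multiset.mem_cons_self _ _))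
  | @fwd w u v h _ ih =>
    intro RA hs H
    apply ih RA hs
    intro R1 h1 huv
    apply sym_mem (h1 _ (hs _ h))
    apply euc_mem (w := u) (u := w) (v := v) (i := i) (by simp) (by simp [huv])
    apply H
    · intro a ha
      simp [h1 a ha]
    · simp
  | @bwd w u v h _ ih =>
    intro RA hs H
    apply ih RA hs
    intro R1 h1 huv
    apply euc_mem (w := u) (u := w) (v := v) (i := i) (h1 _ (hs _ h)) huv
    apply H
    · intro a ha
      simp [h1 a ha]
    · simp

theorem exists_fresh {n : ℕ} (RA : RAt n) (IA : DAt n) (Γ : SSeq n) :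
    ∃ v, ¬ soccurs v RA IA Γ := by
  classical
  let S : Finset ℕ := (RA.map fun t => t.2.1).toFinset ∪ (RA.map fun t => t.2.2).toFinset ∪
    (IA.map fun t => t.2).toFinset ∪ (Γ.map fun t => t.1).toFinset
  obtain ⟨v, hv⟩ := Infinite.exists_notMem_finset S
  refine ⟨v, fun h => hv ?_⟩
  simp only [S, Finset.mem_union, Multiset.mem_toFinset, Multiset.mem_map]
  rcases h with ⟨i, w, u, h, rfl | rfl⟩ | ⟨i, h⟩ | ⟨φ, h⟩
  · exact Or.inl (Or.inl (Or.inl ⟨_, h, rfl⟩))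
  · exact Or.inl (Or.inl (Or.inr ⟨_, h, rfl⟩))
  · exact Or.inl (Or.inr ⟨_, h, rfl⟩)
  · exact Or.inr ⟨_, h, rfl⟩

/-- Renaming of the labels of the right-hand side. -/
def ren {n : ℕ} (f : ℕ → ℕ) (Γ : SSeq n) : SSeq n := Γ.map fun t => (f t.1, t.2)

theorem ren_cons {n : ℕ} (f : ℕ → ℕ) (w : ℕ) (φ : SFml n) (Γ : SSeq n) :
    ren f ((w, φ) ::ₘ Γ) = (f w, φ) ::ₘ ren f Γ := by
  simp [ren]

/-- Every relational atom of `RA` is, up to renaming, a path of `RA'`. -/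
def RelOK {n : ℕ} (f : ℕ → ℕ) (RA RA' : RAt n) : Prop :=
  ∀ i w u, (i, w, u) ∈ RA → IPath RA' i (f w) (f u)

/-- Every deontic atom of `IA` is, up to renaming and paths, one of `IA'`. -/
def DeoOK {n : ℕ} (f : ℕ → ℕ) (IA : DAt n) (RA' : RAt n) (IA' : DAt n) : Prop :=
  ∀ i w, (i, w) ∈ IA → ∃ v, (i, v) ∈ IA' ∧ IPath RA' i v (f w)

theorem RelOK.mono {n : ℕ} {f : ℕ → ℕ} {RA RA' RA'' : RAt n} (h : RelOK f RA RA')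
    (hs : ∀ a ∈ RA', a ∈ RA'') : RelOK f RA RA'' :=
  fun i w u hm => (h i w u hm).mono hs

theorem RelOK.cons {n : ℕ} {f : ℕ → ℕ} {RA RA' : RAt n} {i : Fin (n + 1)} {w u : ℕ}
    (h : RelOK f RA RA') (hp : IPath RA' i (f w) (f u)) :
    RelOK f ((i, w, u) ::ₘ RA) RA' := by
  intro j a b hab
  rcases Multiset.mem_cons.1 hab with h' | h'
  · cases h'; exact hp
  · exact h _ _ _ h'

theorem DeoOK.mono {n : ℕ} {f : ℕ → ℕ} {IA IA' IA'' : DAt n} {RA' RA'' : RAt n}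
    (h : DeoOK f IA RA' IA') (hs : ∀ a ∈ RA', a ∈ RA'') (hs' : ∀ a ∈ IA', a ∈ IA'') :
    DeoOK f IA RA'' IA'' := by
  intro i w hm
  obtain ⟨v, hv, hp⟩ := h i w hm
  exact ⟨v, hs' _ hv, hp.mono hs⟩

theorem DeoOK.cons {n : ℕ} {f : ℕ → ℕ} {IA IA' : DAt n} {RA' : RAt n} {i : Fin (n + 1)}
    {w : ℕ} (h : DeoOK f IA RA' IA') (hp : ∃ v, (i, v) ∈ IA' ∧ IPath RA' i v (f w)) :
    DeoOK f ((i, w) ::ₘ IA) RA' IA' := by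
  intro j a ha
  rcases Multiset.mem_cons.1 ha with h' | h'
  · cases h'; exact hp
  · exact h _ _ h'

theorem ren_update {n : ℕ} {f : ℕ → ℕ} {RA : RAt n} {IA : DAt n} {Γ : SSeq n} {u v : ℕ}
    (hu : ¬ soccurs u RA IA Γ) : ren (Function.update f u v) Γ = ren f Γ := by
  apply Multiset.map_congr rfl
  rintro ⟨x, φ⟩ hx
  have : x ≠ u := by
    rintro rfl
    exact hu (Or.inr (Or.inr ⟨φ, hx⟩))
  simp [Function.update_of_ne this]

theorem RelOK.update {n : ℕ} {f : ℕ → ℕ} {RA RA' : RAt n} {IA : DAt n} {Γ : SSeq n}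
    {u v : ℕ} (h : RelOK f RA RA') (hu : ¬ soccurs u RA IA Γ) :
    RelOK (Function.update f u v) RA RA' := by
  intro i a b hab
  have ha : a ≠ u := by
    rintro rfl
    exact hu (Or.inl ⟨_, _, _, hab, Or.inl rfl⟩)
  have hb : b ≠ u := by
    rintro rfl
    exact hu (Or.inl ⟨_, _, _, hab, Or.inr rfl⟩)
  rw [Function.update_of_ne ha, Function.update_of_ne hb]
  exact h _ _ _ hab

theorem DeoOK.update {n : ℕ} {f : ℕ → ℕ} {RA RA' : RAt n} {IA IA' : DAt n} {Γ : SSeq n}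
    {u v : ℕ} (h : DeoOK f IA RA' IA') (hu : ¬ soccurs u RA IA Γ) :
    DeoOK (Function.update f u v) IA RA' IA' := by
  intro i a ha
  have hau : a ≠ u := by
    rintro rfl
    exact hu (Or.inr (Or.inl ⟨_, ha⟩))
  rw [Function.update_of_ne hau]
  exact h _ _ ha

theorem soccurs_tail {n : ℕ} {RA : RAt n} {IA : DAt n} {Γ : SSeq n} {u w : ℕ} {φ : SFml n}
    (h : ¬ soccurs u RA IA ((w, φ) ::ₘ Γ)) : w ≠ u ∧ ¬ soccurs u RA IA Γ := by
  constructor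
  · rintro rfl
    exact h (Or.inr (Or.inr ⟨φ, Multiset.mem_cons_self _ _⟩))
  · rintro (h' | h' | ⟨ψ, h'⟩)
    · exact h (Or.inl h')
    · exact h (Or.inr (Or.inl h'))
    · exact h (Or.inr (Or.inr ⟨ψ, Multiset.mem_cons_of_mem h'⟩))

/-- Simultaneous renaming, weakening and deletion of redundant atoms. -/
theorem der_ren {n k : ℕ} {RA : RAt n} {IA : DAt n} {Γ : SSeq n} (hd : G3DS n k RA IA Γ) :
    ∀ (f : ℕ → ℕ) (RA' : RAt n) (IA' : DAt n) (Δ : SSeq n),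
      RelOK f RA RA' → DeoOK f IA RA' IA' → G3DS n k RA' IA' (ren f Γ + Δ) := by
  induction hd with
  | id RA IA Γ w p =>
    intro f RA' IA' Δ hR hI
    simp only [ren_cons, Multiset.cons_add]
    exact SDer.id _ _ _ _ _
  | orr _ ih =>
    intro f RA' IA' Δ hR hI
    have := ih f RA' IA' Δ hR hI
    simp only [ren_cons, Multiset.cons_add] at this ⊢
    exact SDer.orr this
  | andr _ _ ih1 ih2 =>
    intro f RA' IA' Δ hR hI
    have h1 := ih1 f RA' IA' Δ hR hI
    have h2 := ih2 f RA' IA' Δ hR hI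
    simp only [ren_cons, Multiset.cons_add] at h1 h2 ⊢
    exact SDer.andr h1 h2
  | diar _ ih =>
    intro f RA' IA' Δ hR hI
    have := ih f RA' IA' Δ hR hI
    simp only [ren_cons, Multiset.cons_add] at this ⊢
    exact SDer.diar this
  | @boxr RA IA Γ w u φ hu _ ih =>
    intro f RA' IA' Δ hR hI
    obtain ⟨v, hv⟩ := exists_fresh RA' IA' (ren f ((w, SFml.box φ) ::ₘ Γ) + Δ)
    have := ih (Function.update f u v) RA' IA' Δ (hR.update hu) (hI.update hu)
    simp only [ren_cons, Multiset.cons_add, Function.update_self,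
      ren_update (soccurs_tail hu).2] at this hv ⊢
    exact SDer.boxr hv this
  | @aboxr RA IA Γ w u i φ hu _ ih =>
    intro f RA' IA' Δ hR hI
    obtain ⟨v, hv⟩ := exists_fresh RA' IA' (ren f ((w, SFml.abox i φ) ::ₘ Γ) + Δ)
    have hs : ∀ a ∈ RA', a ∈ (i, f w, v) ::ₘ RA' := fun a ha => Multiset.mem_cons_of_mem ha
    have := ih (Function.update f u v) ((i, f w, v) ::ₘ RA') IA' Δ
      (((hR.mono hs).update hu).cons (by
        rw [Function.update_self, Function.update_of_ne (soccurs_tail hu).1]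
        exact IPath.fwd (Multiset.mem_cons_self _ _) (IPath.refl _)))
      ((hI.mono hs (fun _ h => h)).update hu)
    simp only [ren_cons, Multiset.cons_add, Function.update_self,
      ren_update (soccurs_tail hu).2] at this hv ⊢
    exact SDer.aboxr hv this
  | @oblr RA IA Γ w u i φ hu _ ih =>
    intro f RA' IA' Δ hR hI
    obtain ⟨v, hv⟩ := exists_fresh RA' IA' (ren f ((w, SFml.obl i φ) ::ₘ Γ) + Δ)
    have := ih (Function.update f u v) RA' ((i, v) ::ₘ IA') Δ (hR.update hu)
      (((hI.mono (fun _ h => h) (fun _ h => Multiset.mem_cons_of_mem h)).update hu).cons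
        ⟨v, Multiset.mem_cons_self _ _, by rw [Function.update_self]; exact IPath.refl _⟩)
    simp only [ren_cons, Multiset.cons_add, Function.update_self,
      ren_update (soccurs_tail hu).2] at this hv ⊢
    exact SDer.oblr hv this
  | @ioa RA IA Γ ws u hu _ ih =>
    intro f RA' IA' Δ hR hI
    obtain ⟨v, hv⟩ := exists_fresh RA' IA' (ren f Γ + Δ)
    apply SDer.ioa (fun i => Function.update f u v (ws i)) v hv
    rw [← ren_update (f := f) (v := v) hu]
    have hs : ∀ a ∈ RA', a ∈ (Finset.univ.val.map fun i : Fin (n + 1) =>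
        (i, Function.update f u v (ws i), v)) + RA' :=
      fun a ha => Multiset.mem_add.2 (Or.inr ha)
    apply ih
    · intro i a b hab
      rcases Multiset.mem_add.1 hab with h | h
      · obtain ⟨j, _, hj⟩ := Multiset.mem_map.1 h
        cases hj
        rw [Function.update_self]
        refine IPath.fwd (Multiset.mem_add.2 (Or.inl ?_)) (IPath.refl _)
        exact Multiset.mem_map.2 ⟨i, Finset.mem_univ_val _, rfl⟩
      · exact ((hR.mono hs).update hu) _ _ _ h
    · exact (hI.mono hs (fun _ h => h)).update hu
  | @apc RA IA Γ hk i ws _ ih =>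
    intro f RA' IA' Δ hR hI
    apply SDer.apc hk i (fun j => f (ws j))
    intro m j hmj
    have hs : ∀ a ∈ RA', a ∈ (i, f (ws m), f (ws j)) ::ₘ RA' :=
      fun a ha => Multiset.mem_cons_of_mem ha
    exact ih m j hmj f _ _ Δ
      ((hR.mono hs).cons (IPath.fwd (Multiset.mem_cons_self _ _) (IPath.refl _)))
      (hI.mono hs (fun _ h => h))
  | prAdia h => exact h.elim
  | prPer1 h => exact h.elim
  | prPer2 h => exact h.elim
  | @adiar RA IA Γ w u i φ _ _ ih =>
    intro f RA' IA' Δ hR hI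
    apply path_add (hR i w u (Multiset.mem_cons_self _ _)) RA' (fun _ h => h)
    intro R1 hs hm
    have := ih f R1 IA' Δ (hR.mono hs) (hI.mono hs (fun _ h => h))
    obtain ⟨R2, rfl⟩ := Multiset.exists_cons_of_mem hm
    simp only [ren_cons, Multiset.cons_add] at this ⊢
    exact SDer.adiar trivial this
  | @operr RA IA Γ w u i φ _ _ ih =>
    intro f RA' IA' Δ hR hI
    obtain ⟨v, hv, hp⟩ := hI i u (Multiset.mem_cons_self _ _)
    apply path_add hp RA' (fun _ h => h)
    intro R1 hs hm
    obtain ⟨I1, rfl⟩ := Multiset.exists_cons_of_mem hv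
    have := ih f R1 ((i, v) ::ₘ (i, f u) ::ₘ I1) Δ (hR.mono hs) (hI.mono hs (by
      intro a ha
      rcases Multiset.mem_cons.1 ha with h | h
      · simp [h]
      · simp [h]))
    obtain ⟨R2, rfl⟩ := Multiset.exists_cons_of_mem hm
    apply SDer.d3 trivial
    rw [Multiset.cons_swap] at this ⊢
    simp only [ren_cons, Multiset.cons_add] at this ⊢
    exact SDer.operr trivial this
  | refl _ _ ih =>
    intro f RA' IA' Δ hR hI
    exact ih f RA' IA' Δ (hR.cons (IPath.refl _)) hI
  | @euc RA IA Γ w u v i _ _ ih =>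
    intro f RA' IA' Δ hR hI
    have h1 := hR i w u (by simp)
    have h2 := hR i w v (by simp)
    apply ih f RA' IA' Δ _ hI
    have := hR.cons (h1.symm.trans h2)
    rwa [Multiset.cons_swap, Multiset.cons_swap (i, u, v)] at this
  | @d2 RA IA Γ u i _ hu _ ih =>
    intro f RA' IA' Δ hR hI
    obtain ⟨v, hv⟩ := exists_fresh RA' IA' (ren f Γ + Δ)
    apply SDer.d2 (u := v) (i := i) trivial hv
    rw [← ren_update (f := f) (v := v) hu]
    exact ih _ _ _ _ (hR.update hu)
      (((hI.mono (fun _ h => h) (fun _ h => Multiset.mem_cons_of_mem h)).update hu).cons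
        ⟨v, Multiset.mem_cons_self _ _, by rw [Function.update_self]; exact IPath.refl _⟩)
  | @d3 RA IA Γ w u i _ _ ih =>
    intro f RA' IA' Δ hR hI
    obtain ⟨v, hv, hp⟩ := hI i w (Multiset.mem_cons_self _ _)
    apply ih f RA' IA' Δ hR
    have := hI.cons ⟨v, hv, hp.trans (hR i w u (Multiset.mem_cons_self _ _))⟩
    rwa [Multiset.cons_swap] at this
  | subst _ _ h => exact h.elim
  | wk h => exact h.elim
  | ctrR _ h => exact h.elim
  | ctrI _ h => exact h.elim
  | ctrF _ _ h => exact h.elim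
  | cut _ _ h => exact h.elim

/-- For all `n, k ∈ ℕ`: if `R, R_[i] wu ⊢ Γ` is derivable in
`G3DS_n^k` and there is an undirected `i`-path from `w` to `u` in `R`, then
`R ⊢ Γ` is derivable in `G3DS_n^k`. -/
theorem delete_relational_atom (n k : ℕ) (RA : RAt n) (IA : DAt n) (Γ : SSeq n)
    (i : Fin (n + 1)) (w u : ℕ)
    (hd : G3DS n k ((i, w, u) ::ₘ RA) IA Γ) (hp : IPath RA i w u) :
    G3DS n k RA IA Γ := by
  have h := der_ren hd (fun x => x) RA IA 0
    (fun j a b hab => by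
      rcases Multiset.mem_cons.1 hab with h | h
      · cases h; exact hp
      · exact IPath.fwd h (IPath.refl _))
    (fun j a ha => ⟨a, ha, IPath.refl _⟩)
  simpa [ren] using h

end DeonticStit
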